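/- Let 0 < s < 1, 0 < α < 2s, and let a ∈ L^∞(𝕊^{N-1}) be nonnegative and even with ∫_{𝕊^{N-1}} |θ_N|^{2s} a(θ) dθ > 0. Let w_α(x) = (x_N)₊^α and L be the operator Lu(x) = ∫_{ℝ^N} [u(x+y)+u(x-y)-2u(x)]|y|^{-(N+2s)} a(y/|y|) dy. Then for every x with x_N > 0, L w_α(x) = C_α x_N^{α-2s} where C_α = c_α ∫_{𝕊^{N-1}} |θ_N|^{2s} a(θ) dθ and c_α = ∫₀^∞ [(1+t)₊^α + (1-t)₊^α - 2] t^{-(1+2s)} dt. Consequently C_α < 0 if α < s, C_α = 0 if α = s, and C_α > 0 if s < α < 2s. -/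

import Mathlib

open MeasureTheory

open Set Filter Topology Module

/-!
In polar coordinates the stable operator, applied to a function `u ∘ ℓ` of one linear variable, is
the one-dimensional operator of order `2s` applied to `u`, times the moment of the spectral density
in the direction `ℓ`: on the ray through `θ` the integrand depends only on `|ℓ θ| r`, and rescaling
`r` produces the factor `|ℓ θ|^{2s}`. Homogeneity of `z₊^α` then gives the power of `ℓ x`, and the
sign is that of the one-dimensional constant `c_α`.

The constant `c_s` vanishes because the substitution `t ↦ t / (1 + t)` turns one half of its
integrand into the opposite of the other, up to the derivative of an elementary function, which
yields an explicit primitive with zero limits. For `α ≠ s` the sign follows because `c_α / α` is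
strictly increasing in `α`: so is `(b ^ α - 1) / α` for every `b ≥ 0` other than `1`, by Bernoulli's
inequality.
-/

lemma setIntegral_lt_setIntegral {X : Type*} [MeasurableSpace X] {μ : Measure X} {S : Set X}
    {f g : X → ℝ} (hS : MeasurableSet S) (hμS : μ S ≠ 0) (hf : IntegrableOn f S μ)
    (hg : IntegrableOn g S μ) (hlt : ∀ x ∈ S, f x < g x) :
    ∫ x in S, f x ∂μ < ∫ x in S, g x ∂μ := by
  have hsupp : S ⊆ Function.support fun x ↦ g x - f x := fun x hx ↦ (sub_pos.2 (hlt x hx)).ne'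
  rw [← sub_pos, ← integral_sub hg hf, setIntegral_pos_iff_support_of_nonneg_ae
    (ae_restrict_of_forall_mem hS fun x hx ↦ (sub_pos.2 (hlt x hx)).le) (hg.sub hf),
    inter_eq_self_of_subset_right hsupp]
  exact hμS.pos

lemma hasDerivAt_integral_comp_endpoints {F : Type*} [NormedAddCommGroup F] [NormedSpace ℝ F]
    [CompleteSpace F] {f : ℝ → F} {S : Set ℝ} (hS : IsOpen S) [S.OrdConnected]
    (hf : ContinuousOn f S) {a b : ℝ → ℝ} {a' b' x : ℝ} (ha : HasDerivAt a a' x)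
    (hb : HasDerivAt b b' x) (haS : a x ∈ S) (hbS : b x ∈ S) :
    HasDerivAt (fun y ↦ ∫ t in a y..b y, f t) (b' • f (b x) - a' • f (a x)) x := by
  have h := intervalIntegral.integral_hasFDerivAt
    (hf.mono (OrdConnected.uIcc_subset ‹_› haS hbS)).intervalIntegrable
    (hf.stronglyMeasurableAtFilter hS _ haS) (hf.stronglyMeasurableAtFilter hS _ hbS)
    (hf.continuousAt (hS.mem_nhds haS)) (hf.continuousAt (hS.mem_nhds hbS))
  exact h.comp_hasDerivAt (f := fun y ↦ (a y, b y)) x (ha.prodMk hb)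

lemma tendsto_one_add_inv_atTop : Tendsto (fun x : ℝ ↦ 1 + x⁻¹) atTop (𝓝 1) := by
  simpa using tendsto_inv_atTop_zero.const_add (1 : ℝ)

lemma tendsto_div_one_add_atTop : Tendsto (fun x : ℝ ↦ x / (1 + x)) atTop (𝓝 1) := by
  have h := tendsto_one_add_inv_atTop.inv₀ one_ne_zero
  rw [inv_one] at h
  refine h.congr' ?_
  filter_upwards [eventually_gt_atTop 0] with x hx
  field_simp
  ring

section PolarCoordinates

variable {E : Type*} [NormedAddCommGroup E] [NormedSpace ℝ E] [FiniteDimensional ℝ E]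
  [MeasurableSpace E] [BorelSpace E]

lemma integral_eq_integral_sphere_prod_Ioi [Nontrivial E] {F : Type*} [NormedAddCommGroup F]
    [NormedSpace ℝ F] (μ : Measure E) [μ.IsAddHaarMeasure] (f : E → F) :
    ∫ y, f y ∂μ = ∫ q : Metric.sphere (0 : E) 1 × ℝ,
      q.2 ^ (finrank ℝ E - 1) • f (q.2 • (q.1 : E))
        ∂(μ.toSphere.prod (volume.restrict (Ioi 0))) := by
  set n := finrank ℝ E - 1
  let ν : Measure (Ioi (0 : ℝ)) := (volume : Measure ℝ).comap (↑)
  have hν : ν.map ((↑) : Ioi (0 : ℝ) → ℝ) = volume.restrict (Ioi 0) :=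
    map_comap_subtype_coe measurableSet_Ioi _
  have : SigmaFinite ν := .of_map ν measurable_subtype_coe.aemeasurable (hν ▸ inferInstance)
  let ι : Metric.sphere (0 : E) 1 × Ioi (0 : ℝ) → Metric.sphere (0 : E) 1 × ℝ := Prod.map id (↑)
  have hι : MeasurableEmbedding ι := .prodMap .id (.subtype_coe measurableSet_Ioi)
  calc ∫ y, f y ∂μ
      = ∫ y : ({0}ᶜ : Set E), f y ∂(μ.comap (↑)) := by
        rw [integral_subtype_comap (measurableSet_singleton _).compl f,
          restrict_compl_singleton]
    _ = ∫ q : Metric.sphere (0 : E) 1 × Ioi (0 : ℝ), f ((q.2 : ℝ) • (q.1 : E))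
          ∂(μ.toSphere.prod (Measure.volumeIoiPow n)) := by
        rw [← μ.measurePreserving_homeomorphUnitSphereProd.integral_comp
          (Homeomorph.measurableEmbedding _)]
        refine integral_congr_ae (.of_forall fun ⟨y, hy⟩ ↦ ?_)
        have hy : ‖y‖ ≠ 0 := norm_ne_zero_iff.2 hy
        simp [smul_smul, hy]
    _ = ∫ q : Metric.sphere (0 : E) 1 × Ioi (0 : ℝ), (q.2 : ℝ) ^ n • f ((q.2 : ℝ) • (q.1 : E))
          ∂(μ.toSphere.prod ν) := by
        rw [Measure.volumeIoiPow, prod_withDensity_right (by fun_prop),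
          integral_withDensity_eq_integral_toReal_smul (by fun_prop) (by simp)]
        refine integral_congr_ae (.of_forall fun ⟨_, r, hr⟩ ↦ ?_)
        simp [ENNReal.toReal_ofReal (pow_nonneg (mem_Ioi.1 hr).le n)]
    _ = _ := by
        rw [← hν, ← μ.toSphere.map_id, Measure.map_prod_map _ _ measurable_id
          measurable_subtype_coe, hι.integral_map, Measure.map_id]
        rfl

end PolarCoordinates

section Dilation

lemma integral_Ioi_mul_dilation (k : ℝ → ℝ) {c m : ℝ} (hm : 0 ≤ m) (hc : m = 0 → c = 0) :
    ∫ r in Ioi 0, c * (m * k (m * r)) = c * ∫ t in Ioi 0, k t := by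
  rcases hm.eq_or_lt with h0 | hpos
  · simp [hc h0.symm]
  · have h := integral_comp_mul_left_Ioi' k 0 hpos
    rw [mul_zero, smul_eq_mul] at h
    rw [integral_const_mul, integral_const_mul, h]

lemma integrableOn_Ioi_mul_dilation {k : ℝ → ℝ} (hk : IntegrableOn k (Ioi 0)) {c m : ℝ}
    (hm : 0 ≤ m) (hc : m = 0 → c = 0) :
    IntegrableOn (fun r ↦ c * (m * k (m * r))) (Ioi 0) := by
  rcases hm.eq_or_lt with h0 | hpos
  · simp [hc h0.symm]
  · have h : IntegrableOn (fun r ↦ k (m * r)) (Ioi 0) :=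
      (integrableOn_Ioi_comp_mul_left_iff k 0 hpos).2 (by rwa [mul_zero])
    exact (h.const_mul m).const_mul c

variable {S : Type*} [MeasurableSpace S] {σ : Measure S} {g m : S → ℝ} {k : ℝ → ℝ}

lemma integrable_prod_mul_dilation (hg : Integrable g σ) (hm : Measurable m)
    (hm0 : ∀ θ, 0 ≤ m θ) (hgm : ∀ θ, m θ = 0 → g θ = 0) (hk : Measurable k)
    (hkint : IntegrableOn k (Ioi 0)) :
    Integrable (fun q : S × ℝ ↦ g q.1 * (m q.1 * k (m q.1 * q.2)))
      (σ.prod (volume.restrict (Ioi 0))) := by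
  have hmeas : AEStronglyMeasurable (fun q : S × ℝ ↦ g q.1 * (m q.1 * k (m q.1 * q.2)))
      (σ.prod (volume.restrict (Ioi 0))) :=
    hg.aestronglyMeasurable.comp_fst.mul
      (by fun_prop : Measurable fun q : S × ℝ ↦ m q.1 * k (m q.1 * q.2)).aestronglyMeasurable
  have hnorm (θ : S) : ∫ r in Ioi 0, ‖g θ * (m θ * k (m θ * r))‖ =
      ‖g θ‖ * ∫ t in Ioi 0, ‖k t‖ := by
    simp only [norm_mul, Real.norm_of_nonneg (hm0 θ)]
    exact integral_Ioi_mul_dilation (‖k ·‖) (hm0 θ) fun h ↦ by rw [hgm θ h, norm_zero]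
  refine (integrable_prod_iff hmeas).2
    ⟨.of_forall fun θ ↦ integrableOn_Ioi_mul_dilation hkint (hm0 θ) (hgm θ), ?_⟩
  simpa only [hnorm] using hg.norm.mul_const _

lemma integral_prod_mul_dilation [SFinite σ] (hg : Integrable g σ) (hm : Measurable m)
    (hm0 : ∀ θ, 0 ≤ m θ) (hgm : ∀ θ, m θ = 0 → g θ = 0) (hk : Measurable k)
    (hkint : IntegrableOn k (Ioi 0)) :
    ∫ q, g q.1 * (m q.1 * k (m q.1 * q.2)) ∂(σ.prod (volume.restrict (Ioi 0))) =
      (∫ t in Ioi 0, k t) * ∫ θ, g θ ∂σ := by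
  rw [integral_prod _ (integrable_prod_mul_dilation hg hm hm0 hgm hk hkint), mul_comm,
    ← integral_mul_const]
  exact integral_congr_ae (.of_forall fun θ ↦ integral_Ioi_mul_dilation k (hm0 θ) (hgm θ))

end Dilation

section StableOperator

/-- The symmetric second difference of `u` at `x` with increment `y`. -/
def secondDiff {G : Type*} [AddGroup G] (u : G → ℝ) (x y : G) : ℝ :=
  u (x + y) + u (x - y) - 2 * u x

lemma even_secondDiff {G : Type*} [AddGroup G] (u : G → ℝ) (x : G) :
    Function.Even (secondDiff u x) := fun y ↦ by
  simp only [secondDiff, sub_neg_eq_add, ← sub_eq_add_neg]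
  ring

lemma secondDiff_zero {G : Type*} [AddGroup G] (u : G → ℝ) (x : G) : secondDiff u x 0 = 0 := by
  simp only [secondDiff, add_zero, sub_zero]
  ring

lemma pow_mul_radial_eq_dilation (φ : ℝ → ℝ) {p m r : ℝ} (h0 : φ 0 = 0) (hm : 0 ≤ m)
    (hr : 0 < r) (n : ℕ) (b : ℝ) :
    r ^ n * (φ (m * r) * r ^ (-((n + 1 : ℕ) + p)) * b) =
      m ^ p * b * (m * (φ (m * r) / (m * r) ^ (1 + p))) := by
  rcases hm.eq_or_lt with rfl | hm
  · simp [h0]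
  · have hpow : r ^ (-((n + 1 : ℕ) + p)) = (r ^ n * r ^ (1 + p))⁻¹ := by
      rw [Real.rpow_neg hr.le, Nat.cast_succ, add_assoc, Real.rpow_add hr, Real.rpow_natCast]
    have : 0 < m ^ p := Real.rpow_pos_of_pos hm p
    have : 0 < r ^ (1 + p) := Real.rpow_pos_of_pos hr _
    rw [hpow, Real.mul_rpow hm.le hr.le, Real.rpow_add hm, Real.rpow_one]
    field_simp

variable {E : Type*} [NormedAddCommGroup E] [NormedSpace ℝ E]
  [MeasurableSpace E] [BorelSpace E]

/-- The operator `L u(x) = ∫ [u(x+y) + u(x-y) - 2u(x)] |y|^{-(N+2s)} a(y/|y|) dy` of order `2s` with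
spectral density `a`, on a normed space of dimension `N` with Haar measure `μ`. -/
noncomputable def stableOp (μ : Measure E) (s : ℝ) (a u : E → ℝ) (x : E) : ℝ :=
  ∫ y, secondDiff u x y * ‖y‖ ^ (-(finrank ℝ E + 2 * s)) * a (‖y‖⁻¹ • y) ∂μ

/-- The moment `∫ |ℓ θ|^p a(θ) dθ` over the unit sphere of a density `a` in the direction of a
linear functional `ℓ`; for `p = 2s` it is the Fourier symbol of `stableOp μ s a` at `ℓ`, up to a
constant. -/
noncomputable def directionalMoment (μ : Measure E) (ℓ : E →L[ℝ] ℝ) (p : ℝ) (a : E → ℝ) : ℝ :=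
  ∫ θ : Metric.sphere (0 : E) 1, |ℓ θ| ^ p * a θ ∂μ.toSphere

variable [FiniteDimensional ℝ E]

lemma integral_comp_linear_mul_homogeneous [Nontrivial E] (μ : Measure E) [μ.IsAddHaarMeasure]
    (ℓ : E →L[ℝ] ℝ) {p : ℝ} (hp : p ≠ 0) {a : E → ℝ}
    (ha : Integrable (fun θ : Metric.sphere (0 : E) 1 ↦ |ℓ θ| ^ p * a θ) μ.toSphere)
    {φ : ℝ → ℝ} (hφ : Measurable φ) (heven : Function.Even φ) (h0 : φ 0 = 0)
    (hint : IntegrableOn (fun t ↦ φ t / t ^ (1 + p)) (Ioi 0)) :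
    ∫ y, φ (ℓ y) * ‖y‖ ^ (-(finrank ℝ E + p)) * a (‖y‖⁻¹ • y) ∂μ =
      (∫ t in Ioi 0, φ t / t ^ (1 + p)) * directionalMoment μ ℓ p a := by
  have habs (t : ℝ) : φ |t| = φ t := by
    rcases abs_choice t with h | h <;> rw [h]
    exact heven t
  obtain ⟨n, hn⟩ := Nat.exists_eq_succ_of_ne_zero (finrank_pos (R := ℝ) (M := E)).ne'
  rw [integral_eq_integral_sphere_prod_Ioi, directionalMoment,
    ← integral_prod_mul_dilation (m := fun θ : Metric.sphere (0 : E) 1 ↦ |ℓ θ|)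
      ha (by fun_prop) (fun _ ↦ abs_nonneg _) (fun θ hθ ↦ by simp [hθ, hp]) (by fun_prop) hint]
  have hpos : ∀ᵐ q ∂(μ.toSphere.prod (volume.restrict (Ioi (0 : ℝ)))), q.2 ∈ Ioi (0 : ℝ) :=
    Measure.quasiMeasurePreserving_snd.ae (ae_restrict_mem measurableSet_Ioi)
  refine integral_congr_ae ?_
  filter_upwards [hpos] with ⟨θ, r⟩ (hr : 0 < r)
  have hnorm : ‖r • (θ : E)‖ = r := by
    rw [norm_smul, norm_eq_of_mem_sphere, mul_one, Real.norm_of_nonneg hr.le]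
  have hℓ : φ (ℓ (r • (θ : E))) = φ (|ℓ θ| * r) := by
    rw [← habs, map_smul, smul_eq_mul, abs_mul, abs_of_pos hr, mul_comm]
  simp only [hnorm, hℓ, inv_smul_smul₀ hr.ne', hn, smul_eq_mul, Nat.succ_sub_one]
  exact pow_mul_radial_eq_dilation φ h0 (abs_nonneg _) hr n _

lemma stableOp_comp_linear [Nontrivial E] (μ : Measure E) [μ.IsAddHaarMeasure] (ℓ : E →L[ℝ] ℝ)
    {s : ℝ} (hs : s ≠ 0) {a : E → ℝ}
    (ha : Integrable (fun θ : Metric.sphere (0 : E) 1 ↦ |ℓ θ| ^ (2 * s) * a θ) μ.toSphere)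
    {u : ℝ → ℝ} (hu : Measurable u) {x : E}
    (hint : IntegrableOn (fun t ↦ secondDiff u (ℓ x) t / t ^ (1 + 2 * s)) (Ioi 0)) :
    stableOp μ s a (u ∘ ℓ) x =
      (∫ t in Ioi 0, secondDiff u (ℓ x) t / t ^ (1 + 2 * s)) *
        directionalMoment μ ℓ (2 * s) a := by
  have hmeas : Measurable (secondDiff u (ℓ x)) := by unfold secondDiff; fun_prop
  rw [← integral_comp_linear_mul_homogeneous μ ℓ (by simpa using hs) ha hmeas
    (even_secondDiff u _) (secondDiff_zero u _) hint]
  simp only [stableOp, secondDiff, Function.comp_apply, map_add, map_sub]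

end StableOperator

section Barrier

/-- The one-dimensional barrier `z ↦ z₊^α`. -/
noncomputable def posPow (α z : ℝ) : ℝ := max z 0 ^ α

lemma posPow_of_nonneg {α z : ℝ} (hz : 0 ≤ z) : posPow α z = z ^ α := by
  rw [posPow, max_eq_left hz]

lemma posPow_of_nonpos {α z : ℝ} (hα : α ≠ 0) (hz : z ≤ 0) : posPow α z = 0 := by
  rw [posPow, max_eq_right hz, Real.zero_rpow hα]

lemma posPow_nonneg (α z : ℝ) : 0 ≤ posPow α z := Real.rpow_nonneg (le_max_right _ _) α

lemma posPow_mul {α c : ℝ} (hc : 0 ≤ c) (z : ℝ) : posPow α (c * z) = c ^ α * posPow α z := by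
  rw [posPow, posPow, ← Real.mul_rpow hc (le_max_right _ _), mul_max_of_nonneg _ _ hc, mul_zero]

lemma continuous_posPow {α : ℝ} (hα : 0 ≤ α) : Continuous (posPow α) :=
  (continuous_id.max continuous_const).rpow_const fun _ ↦ Or.inr hα

lemma secondDiff_posPow_one (α t : ℝ) :
    secondDiff (posPow α) 1 t = posPow α (1 + t) + posPow α (1 - t) - 2 := by
  rw [secondDiff, posPow_of_nonneg zero_le_one, Real.one_rpow, mul_one]

lemma continuous_secondDiff_posPow {α : ℝ} (hα : 0 ≤ α) (z : ℝ) :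
    Continuous (secondDiff (posPow α) z) := by
  have := continuous_posPow hα
  unfold secondDiff
  fun_prop

lemma secondDiff_posPow_eq_rpow_mul {α z : ℝ} (hz : 0 < z) (t : ℝ) :
    secondDiff (posPow α) z t = z ^ α * secondDiff (posPow α) 1 (z⁻¹ * t) := by
  have hadd : z + t = z * (1 + z⁻¹ * t) := by field_simp
  have hsub : z - t = z * (1 - z⁻¹ * t) := by field_simp
  have hone : posPow α z = z ^ α * posPow α 1 := by rw [← posPow_mul hz.le, mul_one]
  rw [secondDiff, hadd, hsub, posPow_mul hz.le, posPow_mul hz.le, hone, secondDiff]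
  ring

lemma strictMonoOn_rpow_sub_one_div {b : ℝ} (hb : 0 ≤ b) (hb1 : b ≠ 1) :
    StrictMonoOn (fun α : ℝ ↦ (b ^ α - 1) / α) (Ioi 0) := by
  intro β (hβ : 0 < β) α (hα : 0 < α) hβα
  have hne : b ^ α - 1 ≠ 0 := by
    rwa [sub_ne_zero, ← Real.one_rpow α, Ne, Real.rpow_left_inj hb zero_le_one hα.ne']
  have hbernoulli := rpow_one_add_lt_one_add_mul_self
    (by linarith [Real.rpow_nonneg hb α]) hne (div_pos hβ hα) ((div_lt_one hα).2 hβα)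
  rw [add_sub_cancel, ← Real.rpow_mul hb, mul_div_cancel₀ _ hα.ne'] at hbernoulli
  rw [div_lt_iff₀ hβ]
  linarith [div_mul_comm β α (b ^ α - 1)]

lemma strictMonoOn_secondDiff_posPow_div {t : ℝ} (ht : t ≠ 0) :
    StrictMonoOn (fun α : ℝ ↦ secondDiff (posPow α) 1 t / α) (Ioi 0) := by
  have hmono {z : ℝ} (hz : z ≠ 1) : StrictMonoOn (fun α ↦ (posPow α z - 1) / α) (Ioi 0) :=
    strictMonoOn_rpow_sub_one_div (le_max_right _ _) (by grind)
  refine ((hmono (z := 1 + t) (by simpa)).add (hmono (z := 1 - t) (by simpa))).congr fun α _ ↦ ?_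
  rw [secondDiff_posPow_one]
  ring

lemma secondDiff_posPow_one_le_sq {α t : ℝ} (hα0 : 0 < α) (hα2 : α < 2) (ht : |t| ≤ 1) :
    secondDiff (posPow α) 1 t ≤ 2 * t ^ 2 := by
  obtain ⟨ht1, ht2⟩ := abs_le.1 ht
  rcases eq_or_ne t 0 with rfl | ht0
  · simp [secondDiff_zero]
  have htwo : secondDiff (posPow 2) 1 t = 2 * t ^ 2 := by
    rw [secondDiff_posPow_one, posPow_of_nonneg (by linarith), posPow_of_nonneg (by linarith),
      Real.rpow_two, Real.rpow_two]
    ring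
  have hlt := strictMonoOn_secondDiff_posPow_div ht0 hα0 (mem_Ioi.2 zero_lt_two) hα2
  beta_reduce at hlt
  rw [htwo, mul_div_cancel_left₀ _ two_ne_zero, div_lt_iff₀ hα0] at hlt
  nlinarith [sq_nonneg t]

lemma neg_sq_le_secondDiff_posPow_one {α t : ℝ} (hα2 : α ≤ 2) (ht : |t| ≤ 1) :
    -(2 * t ^ 2) ≤ secondDiff (posPow α) 1 t := by
  obtain ⟨ht1, ht2⟩ := abs_le.1 ht
  have hp : 0 ≤ 1 + t := by linarith
  have hm : 0 ≤ 1 - t := by linarith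
  have hsq {b : ℝ} (hb : 0 ≤ b) : posPow α b = (b ^ (α / 2)) ^ 2 := by
    rw [posPow_of_nonneg hb, ← Real.rpow_mul_natCast hb, Nat.cast_ofNat,
      div_mul_cancel₀ _ two_ne_zero]
  have hprod : 1 - t ^ 2 ≤ (1 + t) ^ (α / 2) * (1 - t) ^ (α / 2) := by
    rw [← Real.mul_rpow hp hm, show (1 + t) * (1 - t) = 1 - t ^ 2 by ring]
    exact Real.self_le_rpow_of_le_one (by nlinarith) (by nlinarith) (by linarith)
  rw [secondDiff_posPow_one, hsq hp, hsq hm]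
  linarith [two_mul_le_add_sq ((1 + t) ^ (α / 2)) ((1 - t) ^ (α / 2))]

lemma abs_secondDiff_posPow_one_le_rpow {α t : ℝ} (hα : 0 < α) (ht : 1 ≤ t) :
    |secondDiff (posPow α) 1 t| ≤ (2 ^ α + 2) * t ^ α := by
  have h1 : 1 ≤ t ^ α := Real.one_le_rpow ht hα.le
  have hp : 0 ≤ posPow α (1 + t) := posPow_nonneg _ _
  have hp' : posPow α (1 + t) ≤ 2 ^ α * t ^ α := by
    rw [posPow_of_nonneg (by linarith), ← Real.mul_rpow zero_le_two (by linarith)]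
    exact Real.rpow_le_rpow (by linarith) (by linarith) hα.le
  rw [secondDiff_posPow_one, posPow_of_nonpos hα.ne' (by linarith : 1 - t ≤ 0), abs_le]
  constructor <;> nlinarith

lemma integrableOn_secondDiff_posPow_one_div {s α : ℝ} (hs : s < 1) (hα0 : 0 < α)
    (hα2 : α < 2 * s) :
    IntegrableOn (fun t ↦ secondDiff (posPow α) 1 t / t ^ (1 + 2 * s)) (Ioi 0) := by
  have hloc : LocallyIntegrableOn (secondDiff (posPow α) 1) (Ioi 0) :=
    (continuous_secondDiff_posPow hα0.le 1).locallyIntegrable.locallyIntegrableOn _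
  have htop : secondDiff (posPow α) 1 =O[atTop] fun t ↦ t ^ (- -α) := by
    refine .of_bound (2 ^ α + 2) ?_
    filter_upwards [eventually_ge_atTop 1] with t ht
    rw [neg_neg, Real.norm_of_nonneg (Real.rpow_nonneg (by linarith) _)]
    exact abs_secondDiff_posPow_one_le_rpow hα0 ht
  have hzero : secondDiff (posPow α) 1 =O[𝓝[>] 0] fun t ↦ t ^ (-(-2) : ℝ) := by
    refine .of_bound 2 ?_
    filter_upwards [Ioc_mem_nhdsGT zero_lt_one] with t ht
    rw [neg_neg, Real.rpow_two, Real.norm_of_nonneg (sq_nonneg t)]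
    have ht' : |t| ≤ 1 := abs_le.2 ⟨by linarith [ht.1], ht.2⟩
    exact abs_le.2 ⟨neg_sq_le_secondDiff_posPow_one (by linarith) ht',
      secondDiff_posPow_one_le_sq hα0 (by linarith) ht'⟩
  refine (mellin_convergent_of_isBigO_scalar (s := -(2 * s)) hloc htop (by linarith) hzero
    (by linarith)).congr_fun (fun t (ht : 0 < t) ↦ ?_) measurableSet_Ioi
  beta_reduce
  rw [div_eq_inv_mul, ← Real.rpow_neg ht.le, neg_add_rev, sub_eq_add_neg]

lemma secondDiff_posPow_div_eq_dilation {s α z t : ℝ} (hz : 0 < z) (ht : 0 < t) :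
    secondDiff (posPow α) z t / t ^ (1 + 2 * s) = z ^ (α - 2 * s) *
      (z⁻¹ * (secondDiff (posPow α) 1 (z⁻¹ * t) / (z⁻¹ * t) ^ (1 + 2 * s))) := by
  have : 0 < t ^ (1 + 2 * s) := Real.rpow_pos_of_pos ht _
  rw [secondDiff_posPow_eq_rpow_mul hz, Real.mul_rpow (inv_nonneg.2 hz.le) ht.le,
    Real.inv_rpow hz.le, Real.rpow_add hz, Real.rpow_one, Real.rpow_sub hz]
  field_simp

/-- The constant `c_α`: the value at `1` of the one-dimensional operator of order `2s` acting on
`posPow α`. -/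
noncomputable def barrierConst (s α : ℝ) : ℝ :=
  ∫ t in Ioi (0 : ℝ), secondDiff (posPow α) 1 t / t ^ (1 + 2 * s)

lemma strictMonoOn_barrierConst_div {s : ℝ} (hs : s < 1) :
    StrictMonoOn (fun α ↦ barrierConst s α / α) (Ioo 0 (2 * s)) := by
  intro β ⟨hβ0, hβ⟩ α ⟨hα0, hα⟩ hβα
  have hint {γ : ℝ} (hγ0 : 0 < γ) (hγ : γ < 2 * s) :
      IntegrableOn (fun t ↦ secondDiff (posPow γ) 1 t / t ^ (1 + 2 * s) / γ) (Ioi 0) :=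
    (integrableOn_secondDiff_posPow_one_div hs hγ0 hγ).div_const γ
  have hlt (t : ℝ) (ht : 0 < t) : secondDiff (posPow β) 1 t / t ^ (1 + 2 * s) / β <
      secondDiff (posPow α) 1 t / t ^ (1 + 2 * s) / α := by
    have : 0 < t ^ (1 + 2 * s) := Real.rpow_pos_of_pos ht _
    rw [div_right_comm, div_right_comm _ _ α]
    gcongr ?_ / _
    exact strictMonoOn_secondDiff_posPow_div ht.ne' hβ0 hα0 hβα
  simp only [barrierConst, ← integral_div]
  exact setIntegral_lt_setIntegral measurableSet_Ioi (by simp) (hint hβ0 hβ) (hint hα0 hα) hlt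

lemma integrableOn_secondDiff_posPow_div {s α z : ℝ} (hs : s < 1) (hα0 : 0 < α)
    (hα2 : α < 2 * s) (hz : 0 < z) :
    IntegrableOn (fun t ↦ secondDiff (posPow α) z t / t ^ (1 + 2 * s)) (Ioi 0) :=
  (integrableOn_Ioi_mul_dilation (integrableOn_secondDiff_posPow_one_div hs hα0 hα2)
    (inv_nonneg.2 hz.le) fun h ↦ absurd h (inv_ne_zero hz.ne')).congr_fun
    (fun _ ht ↦ (secondDiff_posPow_div_eq_dilation hz ht).symm) measurableSet_Ioi

lemma integral_secondDiff_posPow_div (s α : ℝ) {z : ℝ} (hz : 0 < z) :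
    ∫ t in Ioi 0, secondDiff (posPow α) z t / t ^ (1 + 2 * s) =
      z ^ (α - 2 * s) * barrierConst s α := by
  rw [barrierConst, ← integral_Ioi_mul_dilation _ (inv_nonneg.2 hz.le)
    fun h ↦ absurd h (inv_ne_zero hz.ne')]
  exact setIntegral_congr_fun measurableSet_Ioi fun t ht ↦ secondDiff_posPow_div_eq_dilation hz ht

end Barrier

section CriticalExponent

/-- The part `((1 - t)₊^s - 1) t^{-(1+2s)}` of the integrand of `barrierConst s s` that comes from
the points to the left of `1`. -/
noncomputable def leftKernel (s t : ℝ) : ℝ := (posPow s (1 - t) - 1) / t ^ (1 + 2 * s)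

lemma continuousOn_leftKernel {s : ℝ} (hs : 0 ≤ s) : ContinuousOn (leftKernel s) (Ioi 0) :=
  (((continuous_posPow hs).comp (continuous_const.sub continuous_id)).sub
    continuous_const).continuousOn.div
    (continuousOn_id.rpow_const fun _ ht ↦ Or.inl (ne_of_gt ht))
    fun _ ht ↦ (Real.rpow_pos_of_pos ht _).ne'

lemma abs_leftKernel_le {s t : ℝ} (hs0 : 0 ≤ s) (hs1 : s ≤ 1) (ht0 : 0 < t) (ht1 : t ≤ 1) :
    |leftKernel s t| ≤ t ^ (-(2 * s)) := by
  have hm : 0 ≤ 1 - t := by linarith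
  have hlower : 1 - t ≤ (1 - t) ^ s := Real.self_le_rpow_of_le_one hm (by linarith) hs1
  have hupper : (1 - t) ^ s ≤ 1 := Real.rpow_le_one hm (by linarith) hs0
  have hpow : t ^ (-(2 * s)) = t / t ^ (1 + 2 * s) := by
    rw [Real.rpow_add ht0, Real.rpow_one, Real.rpow_neg ht0.le, div_mul_cancel_left₀ ht0.ne']
  have : 0 < t ^ (1 + 2 * s) := Real.rpow_pos_of_pos ht0 _
  rw [leftKernel, posPow_of_nonneg hm, abs_div, abs_of_pos this, hpow]
  gcongr
  exact abs_le.2 ⟨by linarith, by linarith⟩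

lemma leftKernel_div_one_add {s x : ℝ} (hx : 0 < x) :
    leftKernel s (x / (1 + x)) * (1 / (1 + x) ^ 2) =
      ((1 + x) ^ s - ((1 + x) ^ s) ^ 2) / (1 + x) / x ^ (1 + 2 * s) := by
  have hx1 : 0 < 1 + x := by linarith
  have hinv : 1 - x / (1 + x) = (1 + x)⁻¹ := by field_simp; ring
  have hpow : (1 + x) ^ (1 + 2 * s) = (1 + x) * ((1 + x) ^ s) ^ 2 := by
    rw [Real.rpow_add hx1, Real.rpow_one, mul_comm 2 s, Real.rpow_mul hx1.le, Real.rpow_two]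
  have : 0 < (1 + x) ^ s := Real.rpow_pos_of_pos hx1 s
  have : 0 < x ^ (1 + 2 * s) := Real.rpow_pos_of_pos hx _
  rw [leftKernel, hinv, posPow_of_nonneg (inv_nonneg.2 hx1.le), Real.inv_rpow hx1.le,
    Real.div_rpow hx.le hx1.le, hpow]
  field_simp

/-- A primitive, vanishing at `0` and at infinity, of the integrand of `barrierConst s s`. The
substitution `t ↦ t / (1 + t)` turns the integral of `leftKernel s` into that of the other half of
the integrand, up to sign and to the derivative of the elementary first term. -/
noncomputable def barrierPrimitive (s x : ℝ) : ℝ :=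
  ((1 + x) ^ s - 1) ^ 2 * x ^ (-(2 * s)) / (2 * s) + ∫ t in (x / (1 + x))..x, leftKernel s t

lemma hasDerivAt_sq_rpow_sub_one_mul_rpow {s x : ℝ} (hs : s ≠ 0) (hx : 0 < x) :
    HasDerivAt (fun x : ℝ ↦ ((1 + x) ^ s - 1) ^ 2 * x ^ (-(2 * s)) / (2 * s))
      (((1 + x) ^ s - 1) * ((1 + x) ^ s / (1 + x) * x - ((1 + x) ^ s - 1)) / x ^ (1 + 2 * s))
      x := by
  have hx1 : 0 < 1 + x := by linarith
  have hone : HasDerivAt (fun x : ℝ ↦ (1 + x) ^ s) (1 * s * (1 + x) ^ (s - 1)) x :=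
    ((hasDerivAt_id x).const_add 1).rpow_const (Or.inl hx1.ne')
  have hpow := Real.hasDerivAt_rpow_const (x := x) (p := -(2 * s)) (Or.inl hx.ne')
  refine ((((hone.sub_const 1).fun_pow 2).fun_mul hpow).div_const (2 * s)).congr_deriv ?_
  have : 0 < x ^ (2 * s) := Real.rpow_pos_of_pos hx _
  rw [Real.rpow_sub_one hx1.ne', Real.rpow_sub_one hx.ne', Real.rpow_neg hx.le, Real.rpow_add hx,
    Real.rpow_one]
  push_cast
  field_simp
  ring

lemma hasDerivAt_barrierPrimitive {s x : ℝ} (hs : 0 < s) (hx : 0 < x) :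
    HasDerivAt (barrierPrimitive s) (secondDiff (posPow s) 1 x / x ^ (1 + 2 * s)) x := by
  have hx1 : 0 < 1 + x := by linarith
  have hδ : HasDerivAt (fun x : ℝ ↦ x / (1 + x)) (1 / (1 + x) ^ 2) x := by
    convert! (hasDerivAt_id x).div ((hasDerivAt_id x).const_add 1) hx1.ne' using 1
    simp
  have hint := hasDerivAt_integral_comp_endpoints isOpen_Ioi (continuousOn_leftKernel hs.le) hδ
    (hasDerivAt_id x) (div_pos hx hx1) hx
  refine ((hasDerivAt_sq_rpow_sub_one_mul_rpow hs.ne' hx).add hint).congr_deriv ?_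
  have : 0 < x ^ (1 + 2 * s) := Real.rpow_pos_of_pos hx _
  rw [smul_eq_mul, smul_eq_mul, mul_comm (1 / (1 + x) ^ 2), leftKernel_div_one_add hx, one_mul, id,
    leftKernel, secondDiff_posPow_one, posPow_of_nonneg hx1.le]
  field_simp
  ring

lemma abs_integral_leftKernel_le {s x : ℝ} (hs0 : 0 ≤ s) (hs1 : s ≤ 1) (hx0 : 0 < x)
    (hx1 : x ≤ 1) :
    |∫ t in (x / (1 + x))..x, leftKernel s t| ≤ 2 ^ (2 * s) * x ^ (-(2 * s)) * x ^ 2 := by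
  have hδ : x / 2 ≤ x / (1 + x) := by gcongr; linarith
  have hδx : x / (1 + x) ≤ x := div_le_self hx0.le (by linarith)
  have hlen : |x - x / (1 + x)| ≤ x ^ 2 := by
    have hsub : x - x / (1 + x) = x ^ 2 / (1 + x) := by field_simp; ring
    rw [hsub, abs_of_nonneg (by positivity)]
    exact div_le_self (sq_nonneg x) (by linarith)
  have hpow : (x / 2) ^ (-(2 * s)) = 2 ^ (2 * s) * x ^ (-(2 * s)) := by
    rw [Real.div_rpow hx0.le zero_le_two, Real.rpow_neg zero_le_two, div_inv_eq_mul, mul_comm]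
  have hbound : ∀ t ∈ uIoc (x / (1 + x)) x, ‖leftKernel s t‖ ≤ 2 ^ (2 * s) * x ^ (-(2 * s)) := by
    intro t ht
    rw [uIoc_of_le hδx] at ht
    have hxt : x / 2 ≤ t := hδ.trans ht.1.le
    rw [← hpow]
    exact (abs_leftKernel_le hs0 hs1 (by linarith) (ht.2.trans hx1)).trans
      (Real.rpow_le_rpow_of_nonpos (by positivity) hxt (by linarith))
  refine (intervalIntegral.norm_integral_le_of_norm_le_const hbound).trans ?_
  gcongr

lemma sq_rpow_one_add_sub_one_le {s x : ℝ} (hs0 : 0 ≤ s) (hs1 : s ≤ 1) (hx : 0 ≤ x) :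
    ((1 + x) ^ s - 1) ^ 2 ≤ x ^ 2 := by
  have hlower : 1 ≤ (1 + x) ^ s := Real.one_le_rpow (by linarith) hs0
  have hupper : (1 + x) ^ s ≤ 1 + x := Real.rpow_le_self_of_one_le (by linarith) hs1
  gcongr
  linarith

lemma barrierPrimitive_zero (s : ℝ) : barrierPrimitive s 0 = 0 := by simp [barrierPrimitive]

lemma abs_barrierPrimitive_le {s x : ℝ} (hs0 : 0 < s) (hs1 : s < 1) (hx0 : 0 ≤ x) (hx1 : x ≤ 1) :
    |barrierPrimitive s x| ≤ (1 / (2 * s) + 2 ^ (2 * s)) * x ^ (2 - 2 * s) := by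
  rcases hx0.eq_or_lt with rfl | hx
  · rw [barrierPrimitive_zero, abs_zero]
    positivity
  have hpow : x ^ (2 - 2 * s) = x ^ 2 * x ^ (-(2 * s)) := by
    rw [sub_eq_add_neg, Real.rpow_add hx, Real.rpow_two]
  have helem : |((1 + x) ^ s - 1) ^ 2 * x ^ (-(2 * s)) / (2 * s)| ≤
      x ^ 2 * x ^ (-(2 * s)) / (2 * s) := by
    rw [abs_of_nonneg (by positivity)]
    gcongr ?_ * _ / _
    exact sq_rpow_one_add_sub_one_le hs0.le hs1.le hx.le
  refine (abs_add_le _ _).trans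
    ((add_le_add helem (abs_integral_leftKernel_le hs0.le hs1.le hx hx1)).trans_eq ?_)
  rw [hpow]
  ring

lemma continuousWithinAt_barrierPrimitive_zero {s : ℝ} (hs0 : 0 < s) (hs1 : s < 1) :
    ContinuousWithinAt (barrierPrimitive s) (Ici 0) 0 := by
  have hlim : Tendsto (fun x : ℝ ↦ (1 / (2 * s) + 2 ^ (2 * s)) * x ^ (2 - 2 * s))
      (𝓝[≥] 0) (𝓝 0) := by
    have h := (Real.continuousAt_rpow_const 0 (2 - 2 * s) (Or.inr (by linarith))).const_mul
      (1 / (2 * s) + 2 ^ (2 * s))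
    rw [ContinuousAt, Real.zero_rpow (by linarith), mul_zero] at h
    exact h.mono_left nhdsWithin_le_nhds
  rw [ContinuousWithinAt, barrierPrimitive_zero]
  refine squeeze_zero_norm' ?_ hlim
  filter_upwards [Icc_mem_nhdsGE zero_lt_one] with x hx
  exact abs_barrierPrimitive_le hs0 hs1 hx.1 hx.2

lemma leftKernel_of_one_le {s t : ℝ} (hs : s ≠ 0) (ht : 1 ≤ t) :
    leftKernel s t = -t ^ (-(1 + 2 * s)) := by
  rw [leftKernel, posPow_of_nonpos hs (by linarith), Real.rpow_neg (by linarith), zero_sub,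
    neg_div, one_div]

lemma integral_Ioi_one_leftKernel {s : ℝ} (hs : 0 < s) :
    ∫ t in Ioi 1, leftKernel s t = -1 / (2 * s) := by
  rw [setIntegral_congr_fun measurableSet_Ioi fun t ht ↦ leftKernel_of_one_le hs.ne' (le_of_lt ht),
    integral_neg, integral_Ioi_rpow_of_lt (by linarith) one_pos, Real.one_rpow]
  field_simp
  ring

lemma integrableOn_Ioi_one_leftKernel {s : ℝ} (hs : 0 < s) : IntegrableOn (leftKernel s) (Ioi 1) :=
  (integrableOn_Ioi_rpow_of_lt (by linarith) one_pos).neg.congr_fun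
    (fun _ ht ↦ (leftKernel_of_one_le hs.ne' (le_of_lt ht)).symm) measurableSet_Ioi

lemma tendsto_integral_leftKernel_atTop {s : ℝ} (hs : 0 < s) :
    Tendsto (fun x ↦ ∫ t in (x / (1 + x))..x, leftKernel s t) atTop (𝓝 (-1 / (2 * s))) := by
  have hcont := continuousOn_leftKernel hs.le
  have hleft : Tendsto (fun x ↦ ∫ t in (x / (1 + x))..1, leftKernel s t) atTop (𝓝 0) := by
    have h := (hasDerivAt_integral_comp_endpoints isOpen_Ioi hcont (hasDerivAt_id 1)
      (hasDerivAt_const 1 (1 : ℝ)) (mem_Ioi.2 one_pos)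
        (mem_Ioi.2 one_pos)).continuousAt.tendsto.comp tendsto_div_one_add_atTop
    rwa [id, intervalIntegral.integral_same] at h
  have hright := intervalIntegral_tendsto_integral_Ioi 1 (integrableOn_Ioi_one_leftKernel hs)
    tendsto_id
  rw [integral_Ioi_one_leftKernel hs] at hright
  have h := hleft.add hright
  rw [zero_add] at h
  refine h.congr' ?_
  filter_upwards [eventually_gt_atTop 0] with x hx
  have hint {a b : ℝ} (ha : 0 < a) (hb : 0 < b) : IntervalIntegrable (leftKernel s) volume a b :=
    (hcont.mono (ordConnected_Ioi.uIcc_subset ha hb)).intervalIntegrable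
  exact intervalIntegral.integral_add_adjacent_intervals (hint (by positivity) one_pos)
    (hint one_pos hx)

lemma tendsto_sq_rpow_sub_one_mul_rpow_atTop {s : ℝ} (hs : 0 < s) :
    Tendsto (fun x : ℝ ↦ ((1 + x) ^ s - 1) ^ 2 * x ^ (-(2 * s))) atTop (𝓝 1) := by
  have h := ((tendsto_one_add_inv_atTop.rpow_const (p := s) (Or.inl one_ne_zero)).sub
    (tendsto_rpow_neg_atTop hs)).pow 2
  rw [Real.one_rpow, sub_zero, one_pow] at h
  refine h.congr' ?_
  filter_upwards [eventually_gt_atTop 0] with x hx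
  have hinv : 1 + x⁻¹ = (1 + x) * x⁻¹ := by field_simp; ring
  have hpow : x ^ (-(2 * s)) = (x ^ (-s)) ^ 2 := by
    rw [← Real.rpow_mul_natCast hx.le]
    ring_nf
  rw [hinv, Real.mul_rpow (by linarith) (inv_nonneg.2 hx.le), Real.inv_rpow hx.le,
    ← Real.rpow_neg hx.le, hpow]
  ring

lemma tendsto_barrierPrimitive_atTop {s : ℝ} (hs : 0 < s) :
    Tendsto (barrierPrimitive s) atTop (𝓝 0) := by
  have h := ((tendsto_sq_rpow_sub_one_mul_rpow_atTop hs).div_const (2 * s)).add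
    (tendsto_integral_leftKernel_atTop hs)
  rwa [← add_div, add_neg_cancel, zero_div] at h

lemma barrierConst_self {s : ℝ} (hs0 : 0 < s) (hs1 : s < 1) : barrierConst s s = 0 := by
  rw [barrierConst, integral_Ioi_of_hasDerivAt_of_tendsto
    (continuousWithinAt_barrierPrimitive_zero hs0 hs1)
    (fun x hx ↦ hasDerivAt_barrierPrimitive hs0 hx)
    (integrableOn_secondDiff_posPow_one_div hs1 hs0 (by linarith))
    (tendsto_barrierPrimitive_atTop hs0), barrierPrimitive_zero, sub_zero]

lemma barrierConst_neg {s α : ℝ} (hs : s < 1) (hα : 0 < α) (hαs : α < s) :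
    barrierConst s α < 0 := by
  have hs0 : 0 < s := hα.trans hαs
  have h := strictMonoOn_barrierConst_div hs ⟨hα, by linarith⟩ ⟨hs0, by linarith⟩ hαs
  beta_reduce at h
  rwa [barrierConst_self hs0 hs, zero_div, div_lt_iff₀ hα, zero_mul] at h

lemma barrierConst_pos {s α : ℝ} (hs0 : 0 < s) (hs1 : s < 1) (hsα : s < α) (hα : α < 2 * s) :
    0 < barrierConst s α := by
  have h := strictMonoOn_barrierConst_div hs1 ⟨hs0, by linarith⟩ ⟨hs0.trans hsα, hα⟩ hsα
  beta_reduce at h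
  rwa [barrierConst_self hs0 hs1, zero_div, lt_div_iff₀ (hs0.trans hsα), zero_mul] at h

end CriticalExponent

theorem stmt6_general {E : Type*} [NormedAddCommGroup E] [NormedSpace ℝ E] [FiniteDimensional ℝ E]
    [MeasurableSpace E] [BorelSpace E] (μ : Measure E) [μ.IsAddHaarMeasure] (ℓ : E →L[ℝ] ℝ)
    {s α : ℝ} (hs : s < 1) (hα0 : 0 < α) (hα : α < 2 * s) {a : E → ℝ}
    (ha : 0 < directionalMoment μ ℓ (2 * s) a) {x : E} (hx : 0 < ℓ x) :
    stableOp μ s a (posPow α ∘ ℓ) x =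
        barrierConst s α * directionalMoment μ ℓ (2 * s) a * ℓ x ^ (α - 2 * s) ∧
      (α < s → barrierConst s α * directionalMoment μ ℓ (2 * s) a < 0) ∧
      (α = s → barrierConst s α * directionalMoment μ ℓ (2 * s) a = 0) ∧
      (s < α → 0 < barrierConst s α * directionalMoment μ ℓ (2 * s) a) := by
  have hs0 : 0 < s := by linarith
  have : Nontrivial E := ⟨x, 0, fun h ↦ by simp [h] at hx⟩
  have hint : Integrable (fun θ : Metric.sphere (0 : E) 1 ↦ |ℓ θ| ^ (2 * s) * a θ) μ.toSphere :=
    .of_integral_ne_zero ha.ne'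
  refine ⟨?_, fun h ↦ mul_neg_of_neg_of_pos (barrierConst_neg hs hα0 h) ha, ?_,
    fun h ↦ mul_pos (barrierConst_pos hs0 hs h hα) ha⟩
  · rw [stableOp_comp_linear μ ℓ hs0.ne' hint (continuous_posPow hα0.le).measurable
      (integrableOn_secondDiff_posPow_div hs hα0 hα hx), integral_secondDiff_posPow_div s α hx]
    ring
  · rintro rfl
    rw [barrierConst_self hs0 hs, zero_mul]

/-- Action of the stable operator `L` on the barrier `w_α(x) = (x_N)₊^α`:
`L w_α (x) = C_α x_N^{α-2s}` on the upper half-space, with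
`C_α = c_α ∫_{𝕊^{N-1}} |θ_N|^{2s} a(θ) dθ`, whose sign is that of `α - s`. -/
theorem stmt6 (n : ℕ) (s α : ℝ) (hs0 : 0 < s) (hs1 : s < 1) (hα0 : 0 < α) (hα2 : α < 2 * s)
    (a : EuclideanSpace ℝ (Fin (n + 1)) → ℝ) (ha : Measurable a)
    (hanonneg : ∀ θ, 0 ≤ a θ) (D : ℝ) (habd : ∀ θ, a θ ≤ D)
    (haeven : ∀ θ, a (-θ) = a θ)
    (hκpos : 0 < ∫ θ : Metric.sphere (0 : EuclideanSpace ℝ (Fin (n + 1))) 1,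
      |(θ : EuclideanSpace ℝ (Fin (n + 1))) (Fin.last n)| ^ (2 * s) * a θ
        ∂((volume : Measure (EuclideanSpace ℝ (Fin (n + 1)))).toSphere)) :
    ∀ x : EuclideanSpace ℝ (Fin (n + 1)), 0 < x (Fin.last n) →
      (∫ y : EuclideanSpace ℝ (Fin (n + 1)),
          (max ((x + y) (Fin.last n)) 0 ^ α + max ((x - y) (Fin.last n)) 0 ^ α -
              2 * max (x (Fin.last n)) 0 ^ α) *
            ‖y‖ ^ (-((n + 1 : ℝ) + 2 * s)) * a (‖y‖⁻¹ • y)) =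
        ((∫ t in Set.Ioi (0 : ℝ),
            (max (1 + t) 0 ^ α + max (1 - t) 0 ^ α - 2) / t ^ (1 + 2 * s)) *
          ∫ θ : Metric.sphere (0 : EuclideanSpace ℝ (Fin (n + 1))) 1,
            |(θ : EuclideanSpace ℝ (Fin (n + 1))) (Fin.last n)| ^ (2 * s) * a θ
              ∂((volume : Measure (EuclideanSpace ℝ (Fin (n + 1)))).toSphere)) *
          x (Fin.last n) ^ (α - 2 * s) ∧
      (α < s →
        (∫ t in Set.Ioi (0 : ℝ),
            (max (1 + t) 0 ^ α + max (1 - t) 0 ^ α - 2) / t ^ (1 + 2 * s)) *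
          (∫ θ : Metric.sphere (0 : EuclideanSpace ℝ (Fin (n + 1))) 1,
            |(θ : EuclideanSpace ℝ (Fin (n + 1))) (Fin.last n)| ^ (2 * s) * a θ
              ∂((volume : Measure (EuclideanSpace ℝ (Fin (n + 1)))).toSphere)) < 0) ∧
      (α = s →
        (∫ t in Set.Ioi (0 : ℝ),
            (max (1 + t) 0 ^ α + max (1 - t) 0 ^ α - 2) / t ^ (1 + 2 * s)) *
          (∫ θ : Metric.sphere (0 : EuclideanSpace ℝ (Fin (n + 1))) 1,
            |(θ : EuclideanSpace ℝ (Fin (n + 1))) (Fin.last n)| ^ (2 * s) * a θ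
              ∂((volume : Measure (EuclideanSpace ℝ (Fin (n + 1)))).toSphere)) = 0) ∧
      (s < α →
        0 < (∫ t in Set.Ioi (0 : ℝ),
            (max (1 + t) 0 ^ α + max (1 - t) 0 ^ α - 2) / t ^ (1 + 2 * s)) *
          ∫ θ : Metric.sphere (0 : EuclideanSpace ℝ (Fin (n + 1))) 1,
            |(θ : EuclideanSpace ℝ (Fin (n + 1))) (Fin.last n)| ^ (2 * s) * a θ
              ∂((volume : Measure (EuclideanSpace ℝ (Fin (n + 1)))).toSphere)) := by
  intro x hx
  have h := stmt6_general volume (EuclideanSpace.proj (Fin.last n)) hs1 hα0 hα2 hκpos hx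
  simpa [stableOp, secondDiff, posPow, barrierConst, directionalMoment] using h
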